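/- Let M := (ζ − z)‖g‖ b̂ᵀ + ẑ‖z‖(β − b)ᵀ ∈ ℝ^{k×h}, where z, ζ ∈ ℝᵏ, b, β ∈ ℝʰ with first coordinate of β − b equal to 0, b = (√m, (b^⊥)ᵀ)ᵀ with ‖b^⊥‖ ≤ √m·ρ, ρ ∈ [0,1), ‖g‖² = m + ‖b^⊥‖², and b̂ = b/‖b‖, ẑ = z/‖z‖. Then ‖M‖_F² ≥ m(1−ρ)‖ζ−z‖² + (1−ρ)‖z‖²‖β−b‖². -/

import Mathlib

open scoped BigOperators

/-!
Write `u = ζ - z` and `w = β - b`, so that `M = u bᵀ + z wᵀ`. Expanding the square gives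
`‖M‖_F² = ‖u‖² ‖b‖² + ‖z‖² ‖w‖² + 2 ⟪u, z⟫ ⟪b, w⟫`. As `w` vanishes at the first coordinate,
`⟪b, w⟫` sees only the remaining coordinates of `b`, whose norm is at most `ρ` times the first
coordinate `a = √m`. By Cauchy-Schwarz and AM-GM the cross term is then at most
`ρ (a² ‖u‖² + ‖z‖² ‖w‖²)` in absolute value, while `‖b‖² ≥ a²`.
-/

open scoped RealInnerProductSpace

section InnerProductSpace

variable {E F : Type*} [SeminormedAddCommGroup E] [InnerProductSpace ℝ E]
  [SeminormedAddCommGroup F] [InnerProductSpace ℝ F]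

lemma abs_two_mul_inner_mul_inner_le {ρ a : ℝ} (hρ : 0 ≤ ρ) (u v : E) {b w : F}
    (hbw : |⟪b, w⟫| ≤ ρ * a * ‖w‖) :
    |2 * (⟪u, v⟫ * ⟪b, w⟫)| ≤ ρ * (a ^ 2 * ‖u‖ ^ 2 + ‖v‖ ^ 2 * ‖w‖ ^ 2) :=
  calc |2 * (⟪u, v⟫ * ⟪b, w⟫)|
      = 2 * (|⟪u, v⟫| * |⟪b, w⟫|) := by rw [abs_mul, abs_mul, abs_two]
    _ ≤ 2 * (‖u‖ * ‖v‖ * (ρ * a * ‖w‖)) := by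
      gcongr
      exact abs_real_inner_le_norm u v
    _ = ρ * (2 * (a * ‖u‖) * (‖v‖ * ‖w‖)) := by ring
    _ ≤ ρ * ((a * ‖u‖) ^ 2 + (‖v‖ * ‖w‖) ^ 2) := by
      gcongr
      exact two_mul_le_add_sq _ _
    _ = ρ * (a ^ 2 * ‖u‖ ^ 2 + ‖v‖ ^ 2 * ‖w‖ ^ 2) := by rw [mul_pow, mul_pow]

end InnerProductSpace

section EuclideanSpace

variable {ι κ : Type*} [Fintype ι] [Fintype κ]

lemma sum_sum_mul_add_mul_sq_eq_norm_inner (u v : EuclideanSpace ℝ ι) (b w : EuclideanSpace ℝ κ) :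
    ∑ i, ∑ j, (u i * b j + v i * w j) ^ 2 =
      ‖u‖ ^ 2 * ‖b‖ ^ 2 + ‖v‖ ^ 2 * ‖w‖ ^ 2 + 2 * (⟪u, v⟫ * ⟪b, w⟫) := by
  simp only [EuclideanSpace.real_norm_sq_eq, PiLp.inner_apply, Real.inner_apply]
  rw [Finset.sum_mul_sum, Finset.sum_mul_sum, Finset.sum_mul_sum]
  simp only [Finset.mul_sum, ← Finset.sum_add_distrib]
  refine Finset.sum_congr rfl fun i _ => Finset.sum_congr rfl fun j _ => ?_
  ring

lemma abs_inner_le_sqrt_sum_sq_mul_norm (b : EuclideanSpace ℝ κ) {w : EuclideanSpace ℝ κ}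
    {s : Finset κ} (hw : ∀ j ∉ s, w j = 0) :
    |⟪b, w⟫| ≤ √(∑ j ∈ s, b j ^ 2) * ‖w‖ := by
  have inner_eq : ⟪b, w⟫ = ∑ j ∈ s, b j * w j := by
    simp only [PiLp.inner_apply, Real.inner_apply]
    exact (Finset.sum_subset s.subset_univ fun j _ hj => by rw [hw j hj, mul_zero]).symm
  have norm_sq_eq : ‖w‖ ^ 2 = ∑ j ∈ s, w j ^ 2 := by
    rw [EuclideanSpace.real_norm_sq_eq]
    exact (Finset.sum_subset s.subset_univ fun j _ hj => by rw [hw j hj, sq, mul_zero]).symm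
  refine abs_le_of_sq_le_sq ?_ (by positivity)
  rw [mul_pow, Real.sq_sqrt (by positivity), inner_eq, norm_sq_eq]
  exact Finset.sum_mul_sq_le_sq_mul_sq s b w

theorem frobenius_M_lower_bound_general [DecidableEq κ] {ρ : ℝ} (hρ : 0 ≤ ρ)
    (z ζ : EuclideanSpace ℝ ι) {b β : EuclideanSpace ℝ κ} {j₀ : κ}
    (hb : ∑ j ∈ Finset.univ.erase j₀, b j ^ 2 ≤ b j₀ ^ 2 * ρ ^ 2) (hβ : β j₀ = b j₀) :
    b j₀ ^ 2 * (1 - ρ) * ‖ζ - z‖ ^ 2 + (1 - ρ) * ‖z‖ ^ 2 * ‖β - b‖ ^ 2 ≤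
      ∑ i, ∑ j, ((ζ i - z i) * b j + z i * (β j - b j)) ^ 2 := by
  have sub_apply_eq_zero : ∀ j ∉ Finset.univ.erase j₀, (β - b) j = 0 := by
    simp [hβ]
  have sqrt_le : √(∑ j ∈ Finset.univ.erase j₀, b j ^ 2) ≤ ρ * |b j₀| :=
    Real.sqrt_le_iff.mpr ⟨by positivity, by rwa [mul_pow, sq_abs, mul_comm]⟩
  have inner_le : |⟪b, β - b⟫| ≤ ρ * |b j₀| * ‖β - b‖ :=
    (abs_inner_le_sqrt_sum_sq_mul_norm b sub_apply_eq_zero).trans (by gcongr)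
  have cross_le := abs_two_mul_inner_mul_inner_le hρ (ζ - z) z inner_le
  rw [sq_abs] at cross_le
  have square_le : ‖ζ - z‖ ^ 2 * b j₀ ^ 2 ≤ ‖ζ - z‖ ^ 2 * ‖b‖ ^ 2 :=
    mul_le_mul_of_nonneg_left (sq_le_sq.mpr (by simpa using PiLp.norm_apply_le b j₀)) (sq_nonneg _)
  have expansion := sum_sum_mul_add_mul_sq_eq_norm_inner (ζ - z) z b (β - b)
  simp only [PiLp.sub_apply] at expansion
  linarith [neg_le_of_abs_le cross_le]

end EuclideanSpace

/-- Lower bound on the Frobenius norm of `M = (ζ−z)‖g‖b̂ᵀ + ẑ‖z‖(β−b)ᵀ`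
(whose entries are `(ζᵢ−zᵢ)bⱼ + zᵢ(βⱼ−bⱼ)`):
`‖M‖_F² ≥ m(1−ρ)‖ζ−z‖² + (1−ρ)‖z‖²‖β−b‖²`. -/
theorem frobenius_M_lower_bound {k h m : ℕ} (hm : 0 < m) (hh : 0 < h)
    (ρ : ℝ) (hρ0 : 0 ≤ ρ) (hρ1 : ρ < 1)
    (z ζ : EuclideanSpace ℝ (Fin k)) (b β : EuclideanSpace ℝ (Fin h))
    (hb0 : b ⟨0, hh⟩ = Real.sqrt m)
    (hbperp : ∑ j ∈ Finset.univ.erase (⟨0, hh⟩ : Fin h), (b j) ^ 2 ≤ (m : ℝ) * ρ ^ 2)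
    (hβ0 : β ⟨0, hh⟩ = b ⟨0, hh⟩) :
    (m : ℝ) * (1 - ρ) * ‖ζ - z‖ ^ 2 + (1 - ρ) * ‖z‖ ^ 2 * ‖β - b‖ ^ 2
      ≤ ∑ i : Fin k, ∑ j : Fin h, ((ζ i - z i) * b j + z i * (β j - b j)) ^ 2 := by
  have sq_apply_eq : (m : ℝ) = b ⟨0, hh⟩ ^ 2 := by rw [hb0, Real.sq_sqrt m.cast_nonneg]
  rw [sq_apply_eq] at hbperp ⊢
  exact frobenius_M_lower_bound_general hρ0 z ζ hbperp hβ0
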